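/- Let m ≥ 4 and let e be an integer with 1 ≤ e ≤ ⌊m/2⌋ such that m/gcd(m,e) is odd, and set h = (m − gcd(m,e))/2. Then the supports of the codewords of each of the following weights k in the dual code C̄_E^⊥ form a 2-(2^m, k, λ) design with the corresponding λ: for k = 2^{m−1} + 2^{m−1−h}, λ = (2^{2h−1} + 2^{h−1})(2^{m−1} + 2^{m−1−h} − 1); for k = 2^{m−1} − 2^{m−1−h}, λ = (2^{2h−1} − 2^{h−1})(2^{m−1} − 2^{m−1−h} − 1); and for k = 2^{m−1}, λ = (2^{m−1} − 1)(2^m − 2^{2h} + 1). -/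

import Mathlib

open Polynomial Finset

/-- The polynomial `c₀ + c₁x + ⋯ + c_{n−1}x^{n−1}` associated to a vector. -/
noncomputable def codePoly {n : ℕ} (c : Fin n → ZMod 2) : Polynomial (ZMod 2) :=
  ∑ i : Fin n, Polynomial.C (c i) * Polynomial.X ^ (i : ℕ)

/-- The generator polynomial `g_E(x) = M_α(x) · M_{α^{1+2^e}}(x)`. -/
noncomputable def gE (m e : ℕ) (α : GaloisField 2 m) : Polynomial (ZMod 2) :=
  minpoly (ZMod 2) α * minpoly (ZMod 2) (α ^ (1 + 2 ^ e))

/-- The binary cyclic code `C_E` of length `2^m − 1` with generator polynomial `g_E`. -/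
def CE (m e : ℕ) (α : GaloisField 2 m) : Set (Fin (2 ^ m - 1) → ZMod 2) :=
  {c | gE m e α ∣ codePoly c}

/-- The extended code `C̄_E ⊆ F_2^{2^m}`: the first `2^m − 1` coordinates form a codeword
of `C_E` and all `2^m` coordinates sum to zero. -/
def CEbar (m e : ℕ) (α : GaloisField 2 m) : Set (Fin (2 ^ m) → ZMod 2) :=
  {c | (fun i : Fin (2 ^ m - 1) => c (Fin.castLE (Nat.sub_le _ _) i)) ∈ CE m e α ∧
       ∑ i, c i = 0}

/-- The dual of a set of vectors over a commutative ring, as a submodule. -/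
def dualCode {n : ℕ} {F : Type*} [CommRing F] (C : Set (Fin n → F)) :
    Submodule F (Fin n → F) where
  carrier := {y | ∀ c ∈ C, ∑ i, y i * c i = 0}
  add_mem' := by
    intro a b ha hb c hc
    have h1 := ha c hc
    have h2 := hb c hc
    simp only [Pi.add_apply, add_mul, Finset.sum_add_distrib, h1, h2, add_zero]
  zero_mem' := by intro c hc; simp
  smul_mem' := by
    intro r a ha c hc
    have h1 := ha c hc
    simp only [Pi.smul_apply, smul_eq_mul, mul_assoc, ← Finset.mul_sum, h1, mul_zero]

/-!
Label the `2^m` coordinates of the extended code by the elements of `F = F_{2^m}`. A word `c` then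
lies in `C̄_E` iff `∑ c_x x^(1+2^e) = ∑ c_x x = ∑ c_x = 0`, so its dual consists of the words
`x ↦ Tr(a x^(1+2^e)) + Tr(b x) + c`. This family is stable under the affine substitutions
`x ↦ ux + v`, which act transitively on pairs of points; hence the supports of the words of any
fixed weight form a 2-design, and double counting reads `λ` off the number of these words.

The weights come from character sums. The quadratic form `Tr(a x^(1+2^e))` with `a ≠ 0` has a
radical of size `2^gcd(m,e)` (this is where `m / gcd(m,e)` odd enters: it makes `x ↦ x^(1+2^e)` a
permutation), so its Walsh transform takes only the values `0, ±2^(m-h)`, and Parseval's identity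
says how often it vanishes. The signs `±` are exchanged by `c ↦ c + 1`, so they need not be
separated.
-/

section Arithmetic

theorem coprime_two_pow_sub_one_one_add_two_pow {m e : ℕ} (hodd : Odd (m / m.gcd e)) :
    (2 ^ m - 1).Coprime (1 + 2 ^ e) := by
  set k := m / m.gcd e with hk
  have hek : e * k = m * (e / m.gcd e) := by
    rw [hk, ← Nat.mul_div_assoc _ (Nat.gcd_dvd_left m e),
      ← Nat.mul_div_assoc _ (Nat.gcd_dvd_right m e), mul_comm]
  have hplus : 1 + 2 ^ e ∣ 2 ^ (e * k) + 1 := by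
    simpa [pow_mul, add_comm] using hodd.nat_add_dvd_pow_add_pow (2 ^ e) 1
  have hminus : 2 ^ m - 1 ∣ 2 ^ (e * k) - 1 := by
    rw [hek]
    exact Nat.pow_sub_one_dvd_pow_sub_one 2 (Dvd.intro _ rfl)
  refine Nat.Coprime.eq_one_of_dvd (m := 2) ?_ ?_
  · have hm : m ≠ 0 := by
      rintro rfl
      simp [hk] at hodd
    have hm_odd : Odd (2 ^ m - 1) := Nat.Even.sub_odd Nat.one_le_two_pow
      ((even_two).pow_of_ne_zero hm) odd_one
    exact Nat.coprime_two_right.2 (hm_odd.of_dvd_nat (Nat.gcd_dvd_left _ _))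
  · have hsub := Nat.dvd_sub ((Nat.gcd_dvd_right _ _).trans hplus)
      ((Nat.gcd_dvd_left _ _).trans hminus)
    have hpos : 1 ≤ 2 ^ (e * k) := Nat.one_le_two_pow
    rwa [show 2 ^ (e * k) + 1 - (2 ^ (e * k) - 1) = 2 by omega] at hsub

theorem dvd_of_two_pow_sub_one_dvd {m e : ℕ} (h : 2 ^ m - 1 ∣ 2 ^ e - 1) : m ∣ e := by
  have hgcd : 2 ^ m.gcd e - 1 = 2 ^ m - 1 := by
    rw [← Nat.pow_sub_one_gcd_pow_sub_one, Nat.gcd_eq_left h]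
  have hpow : 2 ^ m.gcd e = 2 ^ m :=
    Nat.sub_one_cancel (by positivity) (by positivity) hgcd
  exact Nat.gcd_eq_left_iff_dvd.1 (Nat.pow_right_injective le_rfl hpow)

variable {m h : ℕ}

theorem two_pow_two_mul_mul_sq (hhm : h ≤ m) :
    2 ^ (2 * h) * (2 ^ (m - h)) ^ 2 = (2 ^ m : ℤ) ^ 2 := by
  rw [← pow_mul, ← pow_mul, ← pow_add]
  congr 1
  omega

theorem two_mul_two_pow_sub_one (hm : 0 < m) : 2 * 2 ^ (m - 1) = 2 ^ m := by
  rw [← pow_succ', Nat.sub_add_cancel hm]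

theorem two_mul_two_pow_sub_one_sub (hhm : h < m) : 2 * 2 ^ (m - 1 - h) = 2 ^ (m - h) := by
  rw [Nat.sub_right_comm, two_mul_two_pow_sub_one (Nat.sub_pos_of_lt hhm)]

theorem abs_two_pow_sub_two_mul_add (hhm : h < m) :
    |(2 : ℤ) ^ m - 2 * (2 ^ (m - 1) + 2 ^ (m - 1 - h) : ℕ)| = 2 ^ (m - h) := by
  have hq : (2 : ℤ) * 2 ^ (m - 1) = 2 ^ m := mod_cast two_mul_two_pow_sub_one (by omega)
  have hM : (2 : ℤ) * 2 ^ (m - 1 - h) = 2 ^ (m - h) := mod_cast two_mul_two_pow_sub_one_sub hhm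
  push_cast
  rw [mul_add, hq, hM, sub_add_cancel_left, abs_neg, abs_of_pos (by positivity)]

theorem abs_two_pow_sub_two_mul_sub (hhm : h < m) :
    |(2 : ℤ) ^ m - 2 * (2 ^ (m - 1) - 2 ^ (m - 1 - h) : ℕ)| = 2 ^ (m - h) := by
  have hq : (2 : ℤ) * 2 ^ (m - 1) = 2 ^ m := mod_cast two_mul_two_pow_sub_one (by omega)
  have hM : (2 : ℤ) * 2 ^ (m - 1 - h) = 2 ^ (m - h) := mod_cast two_mul_two_pow_sub_one_sub hhm
  have hle : 2 ^ (m - 1 - h) ≤ 2 ^ (m - 1) := Nat.pow_le_pow_right two_pos (Nat.sub_le _ _)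
  push_cast [Nat.cast_sub hle]
  rw [mul_sub, hq, hM, sub_sub_cancel, abs_of_pos (by positivity)]

theorem two_pow_two_mul_mul_add (h0 : 0 < h) (hhm : h < m) :
    2 ^ (2 * h) * (2 ^ (m - 1) + 2 ^ (m - 1 - h)) = (2 ^ (2 * h - 1) + 2 ^ (h - 1)) * 2 ^ m := by
  simp only [mul_add, add_mul, ← pow_add]
  congr 2 <;> omega

theorem two_pow_two_mul_mul_sub (h0 : 0 < h) (hhm : h < m) :
    2 ^ (2 * h) * (2 ^ (m - 1) - 2 ^ (m - 1 - h)) = (2 ^ (2 * h - 1) - 2 ^ (h - 1)) * 2 ^ m := by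
  simp only [Nat.mul_sub, Nat.sub_mul, ← pow_add]
  congr 2 <;> omega

end Arithmetic

section FiniteField

variable {K : Type*} [Field K]

theorem pow_bijective_of_coprime [Finite K] {n : ℕ} (hn : n ≠ 0)
    (h : (Nat.card K - 1).Coprime n) : Function.Bijective fun x : K => x ^ n := by
  refine Finite.injective_iff_bijective.1 fun x y (hxy : x ^ n = y ^ n) => ?_
  rcases eq_or_ne y 0 with rfl | hy
  · rwa [zero_pow hn, pow_eq_zero_iff hn] at hxy
  have hx : x ≠ 0 := by
    rintro rfl
    exact pow_ne_zero n hy (by rw [← hxy, zero_pow hn])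
  rw [← Nat.card_units] at h
  have hunits : Units.mk0 x hx = Units.mk0 y hy :=
    (powCoprime h).injective (Units.ext hxy)
  simpa using hunits

theorem card_pow_add_one_eq_self [Finite K] (n : ℕ) :
    Nat.card {x : K // x ^ (n + 1) = x} = (Nat.card K - 1).gcd n + 1 := by
  classical
  have hunits : Nat.card {u : Kˣ // u ^ n = 1} = (Nat.card K - 1).gcd n := by
    rw [← Nat.card_units, ← IsCyclic.card_powMonoidHom_ker]
    rfl
  have hsplit : {x : K | x ^ (n + 1) = x} =
      insert 0 (Units.val '' {u : Kˣ | u ^ n = 1}) := by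
    ext x
    rcases eq_or_ne x 0 with rfl | hx
    · simp
    · lift x to Kˣ using hx.isUnit
      simp [pow_succ, ← Units.val_pow_eq_pow_val, Units.val_inj]
  calc Nat.card {x : K // x ^ (n + 1) = x}
      = {x : K | x ^ (n + 1) = x}.ncard := rfl
    _ = {u : Kˣ | u ^ n = 1}.ncard + 1 := by
      rw [hsplit, Set.ncard_insert_of_notMem (by simp),
        Set.ncard_image_of_injective _ Units.val_injective]
    _ = (Nat.card K - 1).gcd n + 1 := congrArg (· + 1) hunits

theorem trace_pow_card_pow (F : Type*) [Field F] [Fintype F] [Algebra F K]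
    [Algebra.IsAlgebraic F K] (n : ℕ) (x : K) :
    Algebra.trace F K (x ^ Fintype.card F ^ n) = Algebra.trace F K x := by
  induction n with
  | zero => simp
  | succ n ih =>
    rw [pow_succ, pow_mul, ← ih]
    simpa using Algebra.trace_eq_of_algEquiv
      (FiniteField.frobeniusAlgEquivOfAlgebraic F K) (x ^ Fintype.card F ^ n)

theorem exists_trace_mul_eq {F : Type*} [Field F] [Algebra F K] [FiniteDimensional F K]
    [Algebra.IsSeparable F K] (φ : Module.Dual F K) :
    ∃ a : K, ∀ x, φ x = Algebra.trace F K (a * x) := by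
  obtain ⟨a, rfl⟩ :=
    ((Algebra.traceForm F K).toDual (traceForm_nondegenerate F K)).surjective φ
  exact ⟨a, fun x => by rw [LinearMap.BilinForm.toDual_def, Algebra.traceForm_apply]⟩

theorem minpoly_mul_minpoly_dvd_iff {F : Type*} [Field F] [Algebra F K] {x y : K}
    (hx : IsIntegral F x) (hy : IsIntegral F y) (hxy : ¬ IsConjRoot F x y) (P : F[X]) :
    minpoly F x * minpoly F y ∣ P ↔ aeval x P = 0 ∧ aeval y P = 0 := by
  have hcop : IsCoprime (minpoly F x) (minpoly F y) :=
    (minpoly.irreducible hx).coprime_iff_not_dvd.2 fun hdvd => hxy <|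
      eq_of_monic_of_associated (minpoly.monic hx) (minpoly.monic hy) <|
        (minpoly.irreducible hx).associated_of_dvd (minpoly.irreducible hy) hdvd
  rw [← minpoly.dvd_iff, ← minpoly.dvd_iff]
  exact ⟨fun h => ⟨dvd_of_mul_right_dvd h, dvd_of_mul_left_dvd h⟩, fun h => hcop.mul_dvd h.1 h.2⟩

theorem exists_pow_eq_of_isPrimitiveRoot [Finite K] {α : K}
    (hα : IsPrimitiveRoot α (Nat.card K - 1)) {x : K} (hx : x ≠ 0) :
    ∃ i < Nat.card K - 1, α ^ i = x := by
  cases nonempty_fintype K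
  have : NeZero (Nat.card K - 1) := ⟨by have := Finite.one_lt_card (α := K); omega⟩
  exact hα.eq_pow_of_pow_eq_one (by
    rw [Nat.card_eq_fintype_card, FiniteField.pow_card_sub_one_eq_one x hx])

/-- The automorphism carrying `α` to `α^(1+2^e)` is `x ↦ x^(1+2^e)` on the whole field, and its
additivity at `1 + α` is the claim. -/
theorem pow_eq_self_of_isConjRoot [Finite K] [CharP K 2] {F : Type*} [Field F] [Algebra F K]
    {α : K} (hα : IsPrimitiveRoot α (Nat.card K - 1)) {e : ℕ}
    (h : IsConjRoot F (α ^ (1 + 2 ^ e)) α) :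
    α ^ 2 ^ e = α := by
  obtain ⟨σ, hσ⟩ := isConjRoot_iff_exists_algEquiv.1 h
  have hpow (x : K) : σ x = x ^ (1 + 2 ^ e) := by
    rcases eq_or_ne x 0 with rfl | hx
    · simp
    · obtain ⟨i, -, rfl⟩ := exists_pow_eq_of_isPrimitiveRoot hα hx
      rw [map_pow, hσ, ← pow_mul, ← pow_mul, mul_comm]
  have hadd : σ (1 + α) = 1 + σ α := by simp
  simp only [hpow, pow_add, pow_one, add_pow_char_pow, one_pow] at hadd
  rw [← CharTwo.add_eq_zero]
  linear_combination hadd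

end FiniteField

section DualOfKernel

theorem forall_sum_mul_eq_zero_iff_exists_dual {F ι W : Type*} [Field F] [Fintype ι]
    [AddCommGroup W] [Module F W] (v : ι → W) (y : ι → F) :
    (∀ c : ι → F, ∑ i, c i • v i = 0 → ∑ i, y i * c i = 0) ↔
      ∃ φ : Module.Dual F W, ∀ i, y i = φ (v i) := by
  classical
  let Y : Module.Dual F (ι → F) := Fintype.linearCombination F y
  have hker : (∀ c : ι → F, ∑ i, c i • v i = 0 → ∑ i, y i * c i = 0) ↔
      Y ∈ (Fintype.linearCombination F v).ker.dualAnnihilator := by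
    simp [Submodule.mem_dualAnnihilator, Fintype.linearCombination_apply, Y, mul_comm]
  rw [hker, ← LinearMap.range_dualMap_eq_dualAnnihilator_ker, LinearMap.mem_range]
  refine exists_congr fun φ => ⟨fun h i => ?_, fun h => ?_⟩
  · simpa [Y, Fintype.linearCombination_apply_single] using
      (LinearMap.congr_fun h (Pi.single i 1)).symm
  · ext i
    simp [Y, Fintype.linearCombination_apply_single, h]

end DualOfKernel

section HomogeneousCode

variable {X A : Type*} [Fintype X] [Zero A] [DecidableEq A]

theorem hammingNorm_comp_equiv {Y : Type*} [Fintype Y] (σ : Y ≃ X) (f : X → A) :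
    hammingNorm (f ∘ σ) = hammingNorm f :=
  Finset.card_equiv σ (by simp)

/-- The words of weight `k` in `C` whose support contains `T`; their number is the parameter `λ`
of a design. -/
def wordsThrough (C : Finset (X → A)) (k : ℕ) (T : Finset X) : Finset (X → A) :=
  {f ∈ C | hammingNorm f = k ∧ ∀ i ∈ T, f i ≠ 0}

/-- A code is `t`-homogeneous if its automorphism group, acting on coordinates, is transitive on
`t`-element sets of coordinates. -/
def IsHomogeneousCode (C : Finset (X → A)) (t : ℕ) : Prop :=
  ∀ S T : Finset X, #S = t → #T = t →
    ∃ σ : Equiv.Perm X, S.map σ.toEmbedding = T ∧ ∀ f ∈ C, f ∘ σ ∈ C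

theorem two_mul_choose_two (n : ℕ) : 2 * n.choose 2 = n * (n - 1) := by
  rw [Nat.choose_two_right, Nat.mul_div_cancel' (Nat.even_mul_pred_self n).two_dvd]

namespace IsHomogeneousCode

variable {C : Finset (X → A)} {t : ℕ}

theorem card_wordsThrough_le (hC : IsHomogeneousCode C t) (k : ℕ) {S T : Finset X}
    (hS : #S = t) (hT : #T = t) : #(wordsThrough C k T) ≤ #(wordsThrough C k S) := by
  obtain ⟨σ, rfl, hσ⟩ := hC S T hS hT
  refine card_le_card_of_injOn (· ∘ σ) (fun f hf => ?_) σ.surjective.injective_comp_right.injOn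
  simp only [wordsThrough, coe_filter, Set.mem_ofPred_eq] at hf ⊢
  exact ⟨hσ f hf.1, (hammingNorm_comp_equiv σ f).trans hf.2.1,
    fun i hi => hf.2.2 (σ i) (mem_map_of_mem σ.toEmbedding hi)⟩

theorem card_wordsThrough_mul_choose (hC : IsHomogeneousCode C t) (k : ℕ) {T : Finset X}
    (hT : #T = t) :
    #(wordsThrough C k T) * (Fintype.card X).choose t =
      #{f ∈ C | hammingNorm f = k} * k.choose t := by
  have hcount := card_mul_eq_card_mul (s := powersetCard t (univ : Finset X))
    (t := {f ∈ C | hammingNorm f = k}) (m := #(wordsThrough C k T)) (n := k.choose t)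
    (fun S f => ∀ i ∈ S, f i ≠ 0) (fun S hS => ?_) (fun f hf => ?_)
  · rw [← hcount, card_powersetCard, card_univ, mul_comm]
  · have hS := (mem_powersetCard.1 hS).2
    rw [bipartiteAbove, filter_filter]
    exact (hC.card_wordsThrough_le k hT hS).antisymm (hC.card_wordsThrough_le k hS hT)
  · rw [← (mem_filter.1 hf).2, hammingNorm, ← card_powersetCard]
    congr 1
    ext S
    simp [bipartiteBelow, subset_iff, and_comm]

theorem card_wordsThrough_eq_mul (hC : IsHomogeneousCode C 2) {T : Finset X} (hT : #T = 2)
    {k A B : ℕ} (hA : #{f ∈ C | hammingNorm f = k} = (Fintype.card X - 1) * A)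
    (hB : A * k = B * Fintype.card X) : #(wordsThrough C k T) = B * (k - 1) := by
  have hX : 2 ≤ Fintype.card X := hT ▸ card_le_univ T
  have hpairs : 0 < Fintype.card X * (Fintype.card X - 1) := Nat.mul_pos (by omega) (by omega)
  refine Nat.eq_of_mul_eq_mul_right hpairs ?_
  calc #(wordsThrough C k T) * (Fintype.card X * (Fintype.card X - 1))
      = 2 * (#(wordsThrough C k T) * (Fintype.card X).choose 2) := by
        rw [← two_mul_choose_two, mul_left_comm]
    _ = (Fintype.card X - 1) * A * (k * (k - 1)) := by
        rw [hC.card_wordsThrough_mul_choose k hT, hA, mul_left_comm, two_mul_choose_two]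
    _ = (Fintype.card X - 1) * (A * k) * (k - 1) := by ring
    _ = B * (k - 1) * (Fintype.card X * (Fintype.card X - 1)) := by rw [hB]; ring

end IsHomogeneousCode

end HomogeneousCode

section SignCharacter

/-- The nontrivial additive character `c ↦ (-1)^c` of `F₂`, with integer values. -/
def signChar : AddChar (ZMod 2) ℤ :=
  AddChar.zmodChar 2 (ζ := -1) (by norm_num)

theorem signChar_eq_ite (c : ZMod 2) : signChar c = if c = 0 then 1 else -1 := by
  revert c
  decide

theorem signChar_mul_self (c : ZMod 2) : signChar c * signChar c = 1 := by
  revert c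
  decide

theorem sum_signChar_eq_card_sub {X : Type*} [Fintype X] (f : X → ZMod 2) :
    ∑ x, signChar (f x) = Fintype.card X - 2 * hammingNorm f := by
  have hpoint (x : X) : signChar (f x) = 1 - 2 * if f x ≠ 0 then 1 else 0 := by
    rw [signChar_eq_ite]
    by_cases hx : f x = 0 <;> simp [hx]
  simp only [hpoint, sum_sub_distrib, ← mul_sum, hammingNorm, card_filter]
  simp

variable {V : Type*} [AddCommGroup V] [Fintype V]

theorem sum_signChar_addMonoidHom (φ : V →+ ZMod 2) [Decidable (φ = 0)] :
    ∑ x, signChar (φ x) = if φ = 0 then (Fintype.card V : ℤ) else 0 := by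
  have htrivial : signChar.compAddMonoidHom φ = 0 ↔ φ = 0 := by
    refine ⟨fun h => DFunLike.ext _ _ fun x => ?_, by rintro rfl; ext; simp⟩
    have hx : signChar (φ x) = 1 := DFunLike.congr_fun h x
    by_contra hne
    simp_all [signChar_eq_ite]
  classical
  exact (AddChar.sum_eq_ite (signChar.compAddMonoidHom φ)).trans (if_congr htrivial rfl rfl)

variable {q : V → ZMod 2} {B : V →+ V →+ ZMod 2}

theorem sum_signChar_sq_of_polar (hq : ∀ x y, q (x + y) = q x + q y + B x y) :
    (∑ x, signChar (q x)) ^ 2 = Fintype.card V * ∑ r : B.ker, signChar (q r) := by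
  classical
  calc (∑ x, signChar (q x)) ^ 2
      = ∑ y, ∑ r, signChar (q y) * signChar (q (r + y)) := by
        rw [sq, sum_mul_sum]
        exact sum_congr rfl fun y _ =>
          (Equiv.sum_comp (Equiv.addRight y) fun x => signChar (q y) * signChar (q x)).symm
    _ = ∑ r, signChar (q r) * ∑ y, signChar (B r y) := by
        rw [sum_comm]
        refine sum_congr rfl fun r _ => ?_
        rw [mul_sum]
        refine sum_congr rfl fun y _ => ?_
        rw [hq, AddChar.map_add_eq_mul, AddChar.map_add_eq_mul]
        linear_combination signChar (q r) * signChar (B r y) * signChar_mul_self (q y)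
    _ = Fintype.card V * ∑ r : B.ker, signChar (q r) := by
        simp only [sum_signChar_addMonoidHom, mul_ite, mul_zero, ← sum_filter, ← sum_mul]
        rw [mul_comm, sum_subtype (p := (· ∈ B.ker)) _ (by simp [AddMonoidHom.mem_ker])]

theorem sum_signChar_sq_eq_zero_or (hq : ∀ x y, q (x + y) = q x + q y + B x y) :
    (∑ x, signChar (q x)) ^ 2 = 0 ∨
      (∑ x, signChar (q x)) ^ 2 = Fintype.card V * Nat.card B.ker := by
  classical
  let qker : B.ker →+ ZMod 2 := AddMonoidHom.mk' (fun r => q r) fun r s => by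
    have hr : B r = 0 := r.2
    simp [hq, hr]
  have hker : ∑ r : B.ker, signChar (q r) = if qker = 0 then (Fintype.card B.ker : ℤ) else 0 :=
    sum_signChar_addMonoidHom qker
  rw [sum_signChar_sq_of_polar hq, hker, Nat.card_eq_fintype_card]
  split_ifs <;> simp

end SignCharacter

section Walsh

variable {K : Type*} [Field K] [Fintype K] [Algebra (ZMod 2) K]

local notation "Tr" => Algebra.trace (ZMod 2) K

theorem sum_signChar_trace_mul [DecidableEq K] (b : K) :
    ∑ x, signChar (Tr (b * x)) = if b = 0 then (Fintype.card K : ℤ) else 0 := by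
  classical
  let φ : K →+ ZMod 2 := (Tr).toAddMonoidHom.comp (AddMonoidHom.mulLeft b)
  have hφ : φ = 0 ↔ b = 0 := by
    refine ⟨fun h => (traceForm_nondegenerate (ZMod 2) K).1 b (DFunLike.congr_fun h), ?_⟩
    rintro rfl
    ext
    simp [φ]
  exact (sum_signChar_addMonoidHom φ).trans (by simp only [hφ])

/-- The Walsh transform `b ↦ ∑ₓ (-1)^(f(x) + Tr(bx))` of a Boolean function on a finite field of
characteristic two. -/
noncomputable def walsh (f : K → ZMod 2) (b : K) : ℤ :=
  ∑ x, signChar (f x + Tr (b * x))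

theorem walsh_zero [DecidableEq K] (b : K) :
    walsh 0 b = if b = 0 then (Fintype.card K : ℤ) else 0 := by
  simp [walsh, sum_signChar_trace_mul]

theorem signChar_mul_walsh (f : K → ZMod 2) (b : K) (c : ZMod 2) :
    signChar c * walsh f b =
      Fintype.card K - 2 * hammingNorm fun x => f x + Tr (b * x) + c := by
  rw [← sum_signChar_eq_card_sub, walsh, mul_sum]
  exact sum_congr rfl fun x _ => by rw [AddChar.map_add_eq_mul signChar _ c, mul_comm]

theorem sum_walsh_sq (f : K → ZMod 2) : ∑ b, walsh f b ^ 2 = (Fintype.card K : ℤ) ^ 2 := by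
  classical
  have hexpand (b : K) : walsh f b ^ 2 =
      ∑ x, ∑ y, signChar (f x) * signChar (f y) * signChar (Tr ((x - y) * b)) := by
    rw [walsh, sq, sum_mul_sum]
    refine sum_congr rfl fun x _ => sum_congr rfl fun y _ => ?_
    rw [sub_mul, map_sub, CharTwo.sub_eq_add, mul_comm x, mul_comm y]
    simp only [AddChar.map_add_eq_mul]
    ring
  calc ∑ b, walsh f b ^ 2
      = ∑ x, ∑ y, signChar (f x) * signChar (f y) * ∑ b, signChar (Tr ((x - y) * b)) := by
        simp only [hexpand, mul_sum]
        rw [sum_comm]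
        exact sum_congr rfl fun x _ => sum_comm
    _ = (Fintype.card K : ℤ) ^ 2 := by
        simp [sum_signChar_trace_mul, sub_eq_zero, signChar_mul_self, sq]

/-- The number of times the Walsh transform of `f` takes the value `v`. -/
noncomputable def walshCount (f : K → ZMod 2) (v : ℤ) : ℕ :=
  #{b | walsh f b = v}

/-- A Boolean function is plateaued with amplitude `M` if its Walsh transform takes no values other
than `0` and `±M`. -/
def IsPlateaued (f : K → ZMod 2) (M : ℤ) : Prop :=
  ∀ b, walsh f b = 0 ∨ walsh f b = M ∨ walsh f b = -M

theorem isPlateaued_zero : IsPlateaued (0 : K → ZMod 2) (Fintype.card K) := by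
  classical
  intro b
  rw [walsh_zero]
  split_ifs <;> simp

theorem isPlateaued_of_polar {f : K → ZMod 2} {B : K →+ K →+ ZMod 2}
    (hf : ∀ x y, f (x + y) = f x + f y + B x y) {M : ℤ}
    (hM : M ^ 2 = Fintype.card K * Nat.card B.ker) : IsPlateaued f M := by
  intro b
  have hq (x y : K) : f (x + y) + Tr (b * (x + y)) =
      f x + Tr (b * x) + (f y + Tr (b * y)) + B x y := by
    rw [hf, mul_add, map_add]
    ring
  rcases sum_signChar_sq_eq_zero_or (q := fun x => f x + Tr (b * x)) hq with h | h
  · exact Or.inl (pow_eq_zero_iff two_ne_zero |>.1 h)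
  · exact Or.inr (sq_eq_sq_iff_eq_or_eq_neg.1 (h.trans hM.symm))

namespace IsPlateaued

variable {f : K → ZMod 2} {M : ℤ} {N : ℕ}

theorem walshCount_eq_zero (hf : IsPlateaued f M) {v : ℤ} (h0 : v ≠ 0) (h1 : v ≠ M)
    (h2 : v ≠ -M) : walshCount f v = 0 := by
  rw [walshCount, card_eq_zero, filter_eq_empty_iff]
  rintro b - rfl
  rcases hf b with h | h | h <;> contradiction

theorem walshCount_add_walshCount_neg (hf : IsPlateaued f M) (hM : M ≠ 0)
    (hN : N * M ^ 2 = (Fintype.card K : ℤ) ^ 2) : walshCount f M + walshCount f (-M) = N := by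
  have hne : -M ≠ M := by omega
  have hpoint (b : K) : walsh f b ^ 2 =
      ((if walsh f b = M then 1 else 0) + if walsh f b = -M then 1 else 0) * M ^ 2 := by
    rcases hf b with h | h | h <;> simp [h, hM, hM.symm, hne, hne.symm]
  have hparseval := sum_walsh_sq f
  simp only [hpoint, ← sum_mul, sum_add_distrib, ← hN] at hparseval
  have hcount := mul_right_cancel₀ (pow_ne_zero 2 hM) hparseval
  rw [sum_boole, sum_boole] at hcount
  exact_mod_cast hcount

theorem walshCount_zero_add (hf : IsPlateaued f M) (hM : M ≠ 0)
    (hN : N * M ^ 2 = (Fintype.card K : ℤ) ^ 2) : walshCount f 0 + N = Fintype.card K := by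
  have hne : -M ≠ M := by omega
  have hpoint (b : K) : (if walsh f b = 0 then 1 else 0) + ((if walsh f b = M then 1 else 0) +
      if walsh f b = -M then 1 else 0) = 1 := by
    rcases hf b with h | h | h <;> simp [h, hM, hM.symm, hne, hne.symm]
  rw [← hf.walshCount_add_walshCount_neg hM hN]
  simp only [walshCount, card_filter, ← sum_add_distrib, hpoint]
  simp

end IsPlateaued

theorem card_hammingNorm_affine_eq (f : K → ZMod 2) (k : ℕ) :
    #{p : K × ZMod 2 | (hammingNorm fun x => f x + Tr (p.1 * x) + p.2) = k} =
      walshCount f (Fintype.card K - 2 * k) + walshCount f (-(Fintype.card K - 2 * k)) := by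
  have hiff (b : K) (c : ZMod 2) : (hammingNorm fun x => f x + Tr (b * x) + c) = k ↔
      signChar c * walsh f b = Fintype.card K - 2 * k := by
    rw [signChar_mul_walsh]
    omega
  have hsum (g : ZMod 2 → ℕ) : ∑ c, g c = g 0 + g 1 := Fin.sum_univ_two g
  have hone : signChar 1 = -1 := by decide
  simp only [hiff, card_filter, Fintype.sum_prod_type, hsum, walshCount, ← sum_add_distrib,
    AddChar.map_zero_eq_one, hone, one_mul, neg_one_mul, neg_eq_iff_eq_neg]

end Walsh

section Gold

variable {K : Type*} [Field K] [Algebra (ZMod 2) K] {e : ℕ}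

local notation "Tr" => Algebra.trace (ZMod 2) K

/-- The component `x ↦ Tr(a x^(1+2^e))` of the Gold power function `x ↦ x^(1+2^e)`. -/
noncomputable def gold (e : ℕ) (a x : K) : ZMod 2 :=
  Tr (a * x ^ (1 + 2 ^ e))

theorem gold_zero_left (e : ℕ) : gold e (0 : K) = 0 := by
  ext x
  simp [gold]

/-- The symmetric bilinear form that polarizes the quadratic form `gold e a`. -/
noncomputable def goldPolar (e : ℕ) (a : K) : K →+ K →+ ZMod 2 :=
  have : CharP K 2 := charP_of_injective_algebraMap' (ZMod 2) 2
  AddMonoidHom.mk' (fun x => AddMonoidHom.mk' (fun y => Tr (a * (x ^ 2 ^ e * y + x * y ^ 2 ^ e)))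
    fun y z => by rw [add_pow_char_pow, ← map_add]; ring_nf)
    fun x z => by
      ext y
      simp only [AddMonoidHom.mk'_apply, AddMonoidHom.add_apply]
      rw [add_pow_char_pow, ← map_add]
      ring_nf

theorem goldPolar_apply (e : ℕ) (a x y : K) :
    goldPolar e a x y = Tr (a * (x ^ 2 ^ e * y + x * y ^ 2 ^ e)) :=
  rfl

theorem gold_add (e : ℕ) (a x y : K) :
    gold e a (x + y) = gold e a x + gold e a y + goldPolar e a x y := by
  have : CharP K 2 := charP_of_injective_algebraMap' (ZMod 2) 2
  simp only [gold, goldPolar_apply, ← map_add, pow_add, pow_one, add_pow_char_pow]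
  ring_nf

/-- The word of values of the function `x ↦ Tr(a x^(1+2^e)) + Tr(b x) + c`, as a linear function of
the triple `(a, b, c)`. -/
noncomputable def goldWord (e : ℕ) : (K × K × ZMod 2) →ₗ[ZMod 2] K → ZMod 2 :=
  AddMonoidHom.toZModLinearMap 2 <| AddMonoidHom.mk'
    (fun p x => gold e p.1 x + Tr (p.2.1 * x) + p.2.2) fun p r => by
      ext x
      simp only [gold, Prod.fst_add, Prod.snd_add, add_mul, map_add, Pi.add_apply]
      ring

theorem goldWord_apply (p : K × K × ZMod 2) (x : K) :
    goldWord e p x = gold e p.1 x + Tr (p.2.1 * x) + p.2.2 :=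
  rfl

variable [Finite K]

theorem goldPolar_eq_zero_iff (e : ℕ) (a x : K) :
    goldPolar e a x = 0 ↔ a ^ 2 ^ e * x ^ 2 ^ (2 * e) + a * x = 0 := by
  have : CharP K 2 := charP_of_injective_algebraMap' (ZMod 2) 2
  have happly (y : K) :
      goldPolar e a x y = Tr ((a ^ 2 ^ e * x ^ 2 ^ (2 * e) + a * x) * y ^ 2 ^ e) := by
    have htrace : Tr (a * x ^ 2 ^ e * y) = Tr (a ^ 2 ^ e * x ^ 2 ^ (2 * e) * y ^ 2 ^ e) := by
      rw [← trace_pow_card_pow (ZMod 2) e, ZMod.card, mul_pow, mul_pow, ← pow_mul, ← pow_add,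
        two_mul]
    rw [goldPolar_apply, mul_add, map_add, ← mul_assoc, htrace, ← map_add]
    ring_nf
  refine ⟨fun h => ?_, fun h => by ext y; simp [happly, h]⟩
  refine (traceForm_nondegenerate (ZMod 2) K).1 _ fun z => ?_
  obtain ⟨y, rfl⟩ := (bijective_iterateFrobenius (R := K) 2 e).surjective z
  rw [Algebra.traceForm_apply, iterateFrobenius_def, ← happly, h, AddMonoidHom.zero_apply]

theorem exists_goldWord_comp_affine (p : K × K × ZMod 2) (u v : K) :
    ∃ r : K × K × ZMod 2, ∀ x, goldWord e r x = goldWord e p (v + u * x) := by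
  obtain ⟨a, b, c⟩ := p
  obtain ⟨b', hb'⟩ := exists_trace_mul_eq <| AddMonoidHom.toZModLinearMap 2
    ((goldPolar e a v).comp (AddMonoidHom.mulLeft u))
  refine ⟨(a * u ^ (1 + 2 ^ e), b' + b * u, gold e a v + Tr (b * v) + c), fun x => ?_⟩
  have hpolar : goldPolar e a v (u * x) = Tr (b' * x) := hb' x
  have hgold : gold e (a * u ^ (1 + 2 ^ e)) x = gold e a (u * x) := by
    rw [gold, gold, mul_pow, mul_assoc]
  simp only [goldWord_apply, gold_add, hpolar, hgold, add_mul, mul_add, map_add, mul_assoc]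
  ring

variable {m : ℕ}

/-- Multiplying the kernel equation by `x^(2^e)` turns it into `s^(2^e) + s = 0` for
`s = a x^(1+2^e)`, and `x ↦ s` permutes the field. -/
theorem card_ker_goldPolar (hK : Nat.card K = 2 ^ m) (hodd : Odd (m / m.gcd e)) {a : K}
    (ha : a ≠ 0) : Nat.card (goldPolar e a).ker = 2 ^ m.gcd e := by
  have : CharP K 2 := charP_of_injective_algebraMap' (ZMod 2) 2
  have hpow : Function.Bijective fun x : K => x ^ (1 + 2 ^ e) :=
    pow_bijective_of_coprime (by positivity) (hK ▸ coprime_two_pow_sub_one_one_add_two_pow hodd)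
  let s : K ≃ K := (Equiv.ofBijective _ hpow).trans (Equiv.mulLeft₀ a ha)
  have hs_apply (x : K) : s x = a * x ^ (1 + 2 ^ e) := rfl
  have hs (x : K) : x ∈ (goldPolar e a).ker ↔ s x ^ (2 ^ e - 1 + 1) = s x := by
    have hfactor : s x ^ 2 ^ e + s x =
        x ^ 2 ^ e * (a ^ 2 ^ e * x ^ 2 ^ (2 * e) + a * x) := by
      rw [hs_apply]
      ring
    rw [AddMonoidHom.mem_ker, goldPolar_eq_zero_iff, Nat.sub_add_cancel Nat.one_le_two_pow,
      ← CharTwo.add_eq_zero (a := s x ^ 2 ^ e), hfactor]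
    rcases eq_or_ne x 0 with rfl | hx
    · simp
    · simp [hx]
  calc Nat.card (goldPolar e a).ker
      = Nat.card {x : K // x ^ (2 ^ e - 1 + 1) = x} := Nat.card_congr (s.subtypeEquiv hs)
    _ = (2 ^ m - 1).gcd (2 ^ e - 1) + 1 := by rw [card_pow_add_one_eq_self, hK]
    _ = 2 ^ m.gcd e := by
      rw [Nat.pow_sub_one_gcd_pow_sub_one, Nat.sub_add_cancel Nat.one_le_two_pow]

end Gold

section GoldCode

variable {K : Type*} [Field K] [Fintype K] [Algebra (ZMod 2) K]

local notation "Tr" => Algebra.trace (ZMod 2) K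

variable {m e h : ℕ}

theorem isPlateaued_gold (hK : Fintype.card K = 2 ^ m) (hodd : Odd (m / m.gcd e))
    (hh : 2 * h = m - m.gcd e) {a : K} (ha : a ≠ 0) : IsPlateaued (gold e a) (2 ^ (m - h)) := by
  refine isPlateaued_of_polar (gold_add e a) ?_
  have hgcd : m.gcd e ≤ m := Nat.gcd_le_left e <| Nat.pos_of_ne_zero fun hm => by
    simp [hm] at hodd
  rw [card_ker_goldPolar (hK ▸ Nat.card_eq_fintype_card) hodd ha, hK]
  push_cast
  rw [← pow_mul, ← pow_add]
  congr 1
  omega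

/-- The code of all words `x ↦ Tr(a x^(1+2^e)) + Tr(b x) + c`, with coordinates labelled by the
field elements. -/
noncomputable def goldCode (K : Type*) [Field K] [Fintype K] [Algebra (ZMod 2) K] (e : ℕ) :
    Finset (K → ZMod 2) :=
  univ.image (goldWord e)

theorem mem_goldCode {f : K → ZMod 2} : f ∈ goldCode K e ↔ ∃ p, goldWord e p = f := by
  simp [goldCode]

theorem isHomogeneousCode_goldCode : IsHomogeneousCode (goldCode K e) 2 := by
  classical
  intro S T hS hT
  obtain ⟨s, s', hs, rfl⟩ := card_eq_two.1 hS
  obtain ⟨t, t', ht, rfl⟩ := card_eq_two.1 hT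
  have hs' : s' - s ≠ 0 := sub_ne_zero.2 hs.symm
  let u := (t' - t) / (s' - s)
  let v := t - u * s
  have hu : u ≠ 0 := div_ne_zero (sub_ne_zero.2 ht.symm) hs'
  let σ : Equiv.Perm K := (Equiv.mulLeft₀ u hu).trans (Equiv.addLeft v)
  have hσ (x : K) : σ x = v + u * x := rfl
  have hst : σ s = t := sub_add_cancel t (u * s)
  have hst' : σ s' = t' := by
    rw [hσ]
    linear_combination div_mul_cancel₀ (t' - t) hs'
  refine ⟨σ, by simp [hst, hst'], fun f hf => ?_⟩
  obtain ⟨p, rfl⟩ := mem_goldCode.1 hf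
  obtain ⟨r, hr⟩ := exists_goldWord_comp_affine (e := e) p u v
  exact mem_goldCode.2 ⟨r, funext hr⟩

theorem goldWord_injective {M : ℤ} (hM : 0 < M) (hMK : M < Fintype.card K)
    (hP : ∀ a : K, a ≠ 0 → IsPlateaued (gold e a) M) :
    Function.Injective (goldWord (K := K) e) := by
  classical
  rw [injective_iff_map_eq_zero]
  rintro ⟨a, b, c⟩ hp
  have hc : c = 0 := by simpa [goldWord_apply, gold] using congrFun hp 0
  subst hc
  have hwalsh : walsh (gold e a) b = Fintype.card K := by
    have := signChar_mul_walsh (gold e a) b 0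
    change _ = _ - 2 * (hammingNorm (goldWord e (a, b, 0)) : ℤ) at this
    simpa [hp] using this
  have ha : a = 0 := by
    by_contra ha
    rcases hP a ha b with h | h | h <;> omega
  subst ha
  have hb : b = 0 := by
    by_contra hb
    rw [gold_zero_left, walsh_zero, if_neg hb] at hwalsh
    omega
  rw [hb, Prod.mk_zero_zero, Prod.mk_zero_zero]

section Weights

variable {M : ℤ} {N k : ℕ}

theorem card_goldCode_weight (hinj : Function.Injective (goldWord (K := K) e)) (k : ℕ) :
    #{f ∈ goldCode K e | hammingNorm f = k} =
      ∑ a : K, (walshCount (gold e a) (Fintype.card K - 2 * k) +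
        walshCount (gold e a) (-(Fintype.card K - 2 * k))) := by
  rw [goldCode, filter_image, card_image_of_injective _ hinj, card_filter, Fintype.sum_prod_type]
  refine sum_congr rfl fun a _ => ?_
  rw [← card_hammingNorm_affine_eq, card_filter]
  rfl

variable (hM : 0 < M) (hMK : M < Fintype.card K)
  (hP : ∀ a : K, a ≠ 0 → IsPlateaued (gold e a) M) (hN : N * M ^ 2 = (Fintype.card K : ℤ) ^ 2)
include hM hMK hP hN

theorem card_goldCode_weight_of_abs_eq (hk : |(Fintype.card K : ℤ) - 2 * k| = M) :
    #{f ∈ goldCode K e | hammingNorm f = k} = (Fintype.card K - 1) * N := by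
  classical
  have hzero : walshCount (0 : K → ZMod 2) M + walshCount (0 : K → ZMod 2) (-M) = 0 := by
    rw [isPlateaued_zero.walshCount_eq_zero (by omega) (by omega) (by omega),
      isPlateaued_zero.walshCount_eq_zero (by omega) (by omega) (by omega)]
  have hsum (a : K) : walshCount (gold e a) (Fintype.card K - 2 * k) +
      walshCount (gold e a) (-(Fintype.card K - 2 * k)) = if a ≠ 0 then N else 0 := by
    have hsign : walshCount (gold e a) (Fintype.card K - 2 * k) +
        walshCount (gold e a) (-(Fintype.card K - 2 * k)) =
          walshCount (gold e a) M + walshCount (gold e a) (-M) := by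
      rcases eq_or_eq_neg_of_abs_eq hk with h | h <;> simp [h, add_comm]
    rw [hsign]
    split_ifs with ha
    · exact (hP a ha).walshCount_add_walshCount_neg hM.ne' hN
    · rw [not_not.1 ha, gold_zero_left, hzero]
  rw [card_goldCode_weight (goldWord_injective hM hMK hP), sum_congr rfl fun a _ => hsum a,
    ← sum_filter, sum_const, filter_ne', card_erase_of_mem (mem_univ _), card_univ, smul_eq_mul]

theorem card_goldCode_weight_half (hk : Fintype.card K = 2 * k) :
    #{f ∈ goldCode K e | hammingNorm f = k} =
      (Fintype.card K - 1) * (2 * (Fintype.card K - N + 1)) := by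
  have := Classical.decEq K
  have hzero : walshCount (0 : K → ZMod 2) 0 + 1 = Fintype.card K :=
    isPlateaued_zero.walshCount_zero_add (by omega) (by simp)
  have hne {a : K} (ha : a ≠ 0) : walshCount (gold e a) 0 + N = Fintype.card K :=
    (hP a ha).walshCount_zero_add hM.ne' hN
  have hcount (a : K) : walshCount (gold e a) 0 =
      if a = 0 then Fintype.card K - 1 else Fintype.card K - N := by
    split_ifs with ha
    · rw [ha, gold_zero_left]
      omega
    · have := hne ha
      omega
  have hdiff : (Fintype.card K : ℤ) - 2 * k = 0 := by omega
  rw [card_goldCode_weight (goldWord_injective hM hMK hP), hdiff]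
  simp only [neg_zero, ← two_mul, ← mul_sum, hcount, sum_ite, sum_const, filter_eq', filter_ne',
    mem_univ, if_true, card_singleton, card_erase_of_mem, card_univ, smul_eq_mul]
  ring

variable {T : Finset K} (hT : #T = 2)
include hT

theorem card_wordsThrough_goldCode_of_abs_eq {B : ℕ}
    (hk : |(Fintype.card K : ℤ) - 2 * k| = M) (hB : N * k = B * Fintype.card K) :
    #(wordsThrough (goldCode K e) k T) = B * (k - 1) :=
  isHomogeneousCode_goldCode.card_wordsThrough_eq_mul hT
    (card_goldCode_weight_of_abs_eq hM hMK hP hN hk) hB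

theorem card_wordsThrough_goldCode_half (hk : Fintype.card K = 2 * k) :
    #(wordsThrough (goldCode K e) k T) = (Fintype.card K - N + 1) * (k - 1) :=
  isHomogeneousCode_goldCode.card_wordsThrough_eq_mul hT
    (card_goldCode_weight_half hM hMK hP hN hk) (by nth_rw 3 [hk]; ring)

end Weights

section Designs

variable (h0 : 0 < h) (hhm : h < m) (hK : Fintype.card K = 2 ^ m)
  (hP : ∀ a : K, a ≠ 0 → IsPlateaued (gold e a) (2 ^ (m - h))) {T : Finset K} (hT : #T = 2)
include h0 hhm hK hP hT

theorem card_wordsThrough_goldCode_two_pow_of_abs_eq {k B : ℕ}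
    (hk : |(2 : ℤ) ^ m - 2 * k| = 2 ^ (m - h)) (hB : 2 ^ (2 * h) * k = B * 2 ^ m) :
    #(wordsThrough (goldCode K e) k T) = B * (k - 1) :=
  have hMK : (2 : ℤ) ^ (m - h) < 2 ^ m := pow_lt_pow_right₀ one_lt_two (by omega)
  card_wordsThrough_goldCode_of_abs_eq (N := 2 ^ (2 * h)) (by positivity) (by simpa [hK]) hP
    (by simpa [hK] using two_pow_two_mul_mul_sq hhm.le) hT (by simpa [hK]) (by rw [hB, hK])

theorem card_wordsThrough_goldCode_add :
    #(wordsThrough (goldCode K e) (2 ^ (m - 1) + 2 ^ (m - 1 - h)) T) =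
      (2 ^ (2 * h - 1) + 2 ^ (h - 1)) * (2 ^ (m - 1) + 2 ^ (m - 1 - h) - 1) :=
  card_wordsThrough_goldCode_two_pow_of_abs_eq h0 hhm hK hP hT
    (abs_two_pow_sub_two_mul_add hhm) (two_pow_two_mul_mul_add h0 hhm)

theorem card_wordsThrough_goldCode_sub :
    #(wordsThrough (goldCode K e) (2 ^ (m - 1) - 2 ^ (m - 1 - h)) T) =
      (2 ^ (2 * h - 1) - 2 ^ (h - 1)) * (2 ^ (m - 1) - 2 ^ (m - 1 - h) - 1) :=
  card_wordsThrough_goldCode_two_pow_of_abs_eq h0 hhm hK hP hT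
    (abs_two_pow_sub_two_mul_sub hhm) (two_pow_two_mul_mul_sub h0 hhm)

theorem card_wordsThrough_goldCode_two_pow_sub_one :
    #(wordsThrough (goldCode K e) (2 ^ (m - 1)) T) =
      (2 ^ (m - 1) - 1) * (2 ^ m - 2 ^ (2 * h) + 1) := by
  have hMK : (2 : ℤ) ^ (m - h) < 2 ^ m := pow_lt_pow_right₀ one_lt_two (by omega)
  rw [card_wordsThrough_goldCode_half (N := 2 ^ (2 * h)) (by positivity) (by simpa [hK]) hP
    (by simpa [hK] using two_pow_two_mul_mul_sq hhm.le) hT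
    (by rw [hK, two_mul_two_pow_sub_one (by omega)]), hK, mul_comm]

end Designs

end GoldCode

section FieldLabel

variable {K : Type*} [Field K]

/-- The extended labelling `1, α, α², …, α^(q-2), 0` of `q` coordinates by field elements, which
turns words of the extended code into functions on the field. -/
def fieldLabel {q : ℕ} (α : K) (i : Fin q) : K :=
  if (i : ℕ) < q - 1 then α ^ (i : ℕ) else 0

theorem fieldLabel_bijective [Finite K] {q : ℕ} (hq : Nat.card K = q) {α : K}
    (hα : IsPrimitiveRoot α (q - 1)) : Function.Bijective (fieldLabel α : Fin q → K) := by
  subst hq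
  refine Function.Surjective.bijective_of_nat_card_le (fun x => ?_) (by simp)
  have hpos : 0 < Nat.card K := Nat.card_pos
  rcases eq_or_ne x 0 with rfl | hx
  · exact ⟨⟨Nat.card K - 1, by omega⟩, by simp [fieldLabel]⟩
  · obtain ⟨i, hi, rfl⟩ := exists_pow_eq_of_isPrimitiveRoot hα hx
    exact ⟨⟨i, by omega⟩, by simp [fieldLabel, hi]⟩

theorem sum_smul_fieldLabel_pow {F : Type*} [Semiring F] [Module F K] {q : ℕ} (α : K) {n : ℕ}
    (hn : n ≠ 0) (c : Fin q → F) :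
    ∑ i, c i • fieldLabel α i ^ n =
      ∑ i : Fin (q - 1), c (Fin.castLE (Nat.sub_le _ _) i) • (α ^ n) ^ (i : ℕ) := by
  cases q with
  | zero => rfl
  | succ q =>
    rw [Fin.sum_univ_castSucc]
    simp only [fieldLabel, Nat.add_sub_cancel, Fin.val_castSucc, Fin.is_lt, if_true, Fin.val_last,
      lt_irrefl, if_false, zero_pow hn, smul_zero, add_zero, pow_right_comm α]
    rfl

end FieldLabel

section ExtendedCode

theorem aeval_codePoly {A : Type*} [Semiring A] [Algebra (ZMod 2) A] {n : ℕ}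
    (c : Fin n → ZMod 2) (x : A) : aeval x (codePoly c) = ∑ i, c i • x ^ (i : ℕ) := by
  simp [codePoly, Algebra.smul_def]

theorem exists_dual_iff_exists_goldWord {K ι : Type*} [Field K] [Finite K] [Algebra (ZMod 2) K]
    (e : ℕ) (x : ι → K) (y : ι → ZMod 2) :
    (∃ φ : Module.Dual (ZMod 2) (K × K × ZMod 2), ∀ i, y i = φ (x i ^ (1 + 2 ^ e), x i, 1)) ↔
      ∃ p, y = goldWord e p ∘ x := by
  constructor
  · rintro ⟨φ, hφ⟩
    obtain ⟨a, ha⟩ := exists_trace_mul_eq (φ ∘ₗ .inl _ _ _)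
    obtain ⟨b, hb⟩ := exists_trace_mul_eq (φ ∘ₗ .inr _ _ _ ∘ₗ .inl _ _ _)
    refine ⟨(a, b, φ (0, 0, 1)), funext fun i => ?_⟩
    rw [hφ, Function.comp_apply, goldWord_apply, gold, ← ha, ← hb]
    simp [← map_add]
  · rintro ⟨⟨a, b, c⟩, rfl⟩
    refine ⟨(Algebra.traceForm (ZMod 2) K a).coprod
      ((Algebra.traceForm (ZMod 2) K b).coprod (c • .id)), fun i => ?_⟩
    simp [goldWord_apply, gold, add_assoc]

variable {m e : ℕ} (hm : m ≠ 0) (hme : ¬ m ∣ e) {α : GaloisField 2 m}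
  (hα : IsPrimitiveRoot α (2 ^ m - 1))
include hm hme hα

theorem gE_dvd_iff (P : (ZMod 2)[X]) :
    gE m e α ∣ P ↔ aeval α P = 0 ∧ aeval (α ^ (1 + 2 ^ e)) P = 0 := by
  refine minpoly_mul_minpoly_dvd_iff (.of_finite _ _) (.of_finite _ _) (fun hconj => hme ?_) P
  have hfix : α ^ 2 ^ e = α :=
    pow_eq_self_of_isConjRoot (by rwa [GaloisField.card 2 m hm]) hconj.symm
  have hα0 : α ≠ 0 := hα.ne_zero (by have := Nat.one_lt_two_pow hm; omega)
  have hone : α ^ (2 ^ e - 1) = 1 := by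
    rw [← mul_eq_right₀ hα0, ← pow_succ, Nat.sub_add_cancel Nat.one_le_two_pow, hfix]
  exact dvd_of_two_pow_sub_one_dvd (hα.dvd_of_pow_eq_one _ hone)

theorem mem_CEbar_iff (c : Fin (2 ^ m) → ZMod 2) :
    c ∈ CEbar m e α ↔
      ∑ i, c i • ((fieldLabel α i ^ (1 + 2 ^ e), fieldLabel α i, 1) :
        GaloisField 2 m × GaloisField 2 m × ZMod 2) = 0 := by
  have hlin := sum_smul_fieldLabel_pow α one_ne_zero c
  simp only [pow_one] at hlin
  have hgold := sum_smul_fieldLabel_pow α (n := 1 + 2 ^ e) (by positivity) c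
  simp only [CEbar, CE, Set.mem_ofPred_eq, gE_dvd_iff hm hme hα, aeval_codePoly, ← hlin, ← hgold,
    Prod.ext_iff, Prod.fst_sum, Prod.snd_sum, Prod.smul_fst, Prod.smul_snd, Prod.fst_zero,
    Prod.snd_zero, smul_eq_mul, mul_one]
  tauto

theorem mem_dualCode_CEbar_iff (y : Fin (2 ^ m) → ZMod 2) :
    y ∈ dualCode (CEbar m e α) ↔ ∃ p, y = goldWord e p ∘ fieldLabel α := by
  rw [← exists_dual_iff_exists_goldWord, ← forall_sum_mul_eq_zero_iff_exists_dual]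
  exact forall_congr' fun c => by rw [mem_CEbar_iff hm hme hα]

theorem exists_ncard_dualCode_eq_card_wordsThrough [Fintype (GaloisField 2 m)]
    (T : Finset (Fin (2 ^ m))) :
    ∃ S : Finset (GaloisField 2 m), #S = #T ∧ ∀ k,
      {y | y ∈ dualCode (CEbar m e α) ∧ hammingNorm y = k ∧ ∀ i ∈ T, y i ≠ 0}.ncard =
        #(wordsThrough (goldCode (GaloisField 2 m) e) k S) := by
  let σ := Equiv.ofBijective _ (fieldLabel_bijective (GaloisField.card 2 m hm) hα)
  refine ⟨T.map σ.toEmbedding, card_map _, fun k => ?_⟩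
  rw [← Set.ncard_coe_finset, ← Set.ncard_image_of_injective _ σ.surjective.injective_comp_right]
  congr 1
  ext y
  simp only [Set.mem_ofPred_eq, mem_dualCode_CEbar_iff hm hme hα, Set.mem_image, mem_coe,
    wordsThrough, mem_filter, mem_goldCode, forall_mem_map]
  constructor
  · rintro ⟨⟨p, rfl⟩, hk, hT⟩
    exact ⟨goldWord e p, ⟨⟨p, rfl⟩, (hammingNorm_comp_equiv σ _).symm.trans hk, hT⟩, rfl⟩
  · rintro ⟨_, ⟨⟨p, rfl⟩, hk, hT⟩, rfl⟩
    exact ⟨⟨p, rfl⟩, (hammingNorm_comp_equiv σ _).trans hk, hT⟩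

end ExtendedCode

theorem dual_code_designs_case_a_general
    (m e h : ℕ) (hme : ¬ m ∣ e) (hodd : Odd (m / Nat.gcd m e)) (hh : 2 * h = m - Nat.gcd m e)
    (α : GaloisField 2 m) (hα : orderOf α = 2 ^ m - 1) :
    (∀ T : Finset (Fin (2 ^ m)), T.card = 2 →
      {y : Fin (2 ^ m) → ZMod 2 | y ∈ dualCode (CEbar m e α) ∧
        hammingNorm y = 2 ^ (m - 1) + 2 ^ (m - 1 - h) ∧ ∀ i ∈ T, y i ≠ 0}.ncard =
      (2 ^ (2 * h - 1) + 2 ^ (h - 1)) * (2 ^ (m - 1) + 2 ^ (m - 1 - h) - 1)) ∧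
    (∀ T : Finset (Fin (2 ^ m)), T.card = 2 →
      {y : Fin (2 ^ m) → ZMod 2 | y ∈ dualCode (CEbar m e α) ∧
        hammingNorm y = 2 ^ (m - 1) - 2 ^ (m - 1 - h) ∧ ∀ i ∈ T, y i ≠ 0}.ncard =
      (2 ^ (2 * h - 1) - 2 ^ (h - 1)) * (2 ^ (m - 1) - 2 ^ (m - 1 - h) - 1)) ∧
    (∀ T : Finset (Fin (2 ^ m)), T.card = 2 →
      {y : Fin (2 ^ m) → ZMod 2 | y ∈ dualCode (CEbar m e α) ∧
        hammingNorm y = 2 ^ (m - 1) ∧ ∀ i ∈ T, y i ≠ 0}.ncard =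
      (2 ^ (m - 1) - 1) * (2 ^ m - 2 ^ (2 * h) + 1)) := by
  have hm : m ≠ 0 := by
    rintro rfl
    simp at hodd
  obtain ⟨h0, hhm⟩ : 0 < h ∧ h < m := by
    have hlt : m.gcd e < m :=
      (Nat.gcd_le_left e hm.bot_lt).lt_of_ne (mt Nat.gcd_eq_left_iff_dvd.1 hme)
    omega
  have := Fintype.ofFinite (GaloisField 2 m)
  have hK : Fintype.card (GaloisField 2 m) = 2 ^ m := by
    rw [← Nat.card_eq_fintype_card, GaloisField.card 2 m hm]
  have hP (a : GaloisField 2 m) (ha : a ≠ 0) := isPlateaued_gold hK hodd hh ha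
  have htransport :=
    exists_ncard_dualCode_eq_card_wordsThrough hm hme (IsPrimitiveRoot.iff_orderOf.2 hα)
  refine ⟨fun T hT => ?_, fun T hT => ?_, fun T hT => ?_⟩ <;>
    obtain ⟨S, hS, hncard⟩ := htransport T <;>
    rw [hncard]
  · exact card_wordsThrough_goldCode_add h0 hhm hK hP (hS.trans hT)
  · exact card_wordsThrough_goldCode_sub h0 hhm hK hP (hS.trans hT)
  · exact card_wordsThrough_goldCode_two_pow_sub_one h0 hhm hK hP (hS.trans hT)

/-- Let `m ≥ 4`, `1 ≤ e ≤ ⌊m/2⌋` with `m/gcd(m,e)` odd, and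
`h = (m − gcd(m,e))/2`. Then the supports of the codewords of weight
`k = 2^{m−1} + 2^{m−1−h}`, `k = 2^{m−1} − 2^{m−1−h}`, and `k = 2^{m−1}` in `C̄_E^⊥`
form `2-(2^m, k, λ)` designs with the corresponding values of `λ`. -/
theorem dual_code_designs_case_a
    (m e h : ℕ) (hm : 4 ≤ m) (he1 : 1 ≤ e) (heM : 2 * e ≤ m)
    (hodd : Odd (m / Nat.gcd m e)) (hh : 2 * h = m - Nat.gcd m e)
    (α : GaloisField 2 m) (hα : orderOf α = 2 ^ m - 1) :
    (∀ T : Finset (Fin (2 ^ m)), T.card = 2 →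
      {y : Fin (2 ^ m) → ZMod 2 | y ∈ dualCode (CEbar m e α) ∧
        hammingNorm y = 2 ^ (m - 1) + 2 ^ (m - 1 - h) ∧ ∀ i ∈ T, y i ≠ 0}.ncard =
      (2 ^ (2 * h - 1) + 2 ^ (h - 1)) * (2 ^ (m - 1) + 2 ^ (m - 1 - h) - 1)) ∧
    (∀ T : Finset (Fin (2 ^ m)), T.card = 2 →
      {y : Fin (2 ^ m) → ZMod 2 | y ∈ dualCode (CEbar m e α) ∧
        hammingNorm y = 2 ^ (m - 1) - 2 ^ (m - 1 - h) ∧ ∀ i ∈ T, y i ≠ 0}.ncard =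
      (2 ^ (2 * h - 1) - 2 ^ (h - 1)) * (2 ^ (m - 1) - 2 ^ (m - 1 - h) - 1)) ∧
    (∀ T : Finset (Fin (2 ^ m)), T.card = 2 →
      {y : Fin (2 ^ m) → ZMod 2 | y ∈ dualCode (CEbar m e α) ∧
        hammingNorm y = 2 ^ (m - 1) ∧ ∀ i ∈ T, y i ≠ 0}.ncard =
      (2 ^ (m - 1) - 1) * (2 ^ m - 2 ^ (2 * h) + 1)) :=
  dual_code_designs_case_a_general m e h
    (fun hdvd => absurd (Nat.le_of_dvd he1 hdvd) (by omega)) hodd hh α hα
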